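/- For any integer n ≥ 2 and any λ ∈ ℝ, there exists ε₁ > 0 with the following property: for every ε with 0 < |ε| ≤ ε₁ and every function f : [0, √(2n)] → ℝ that is C¹ on [0, √(2n)], C² on (0, √(2n)], satisfies the profile ODE f''(r)/(1 + f'(r)²) = (r − (n−1)/r)·f'(r) − f(r) − λ·√(1 + f'(r)²) on (0, √(2n)], and has f(0) = −λ + ε and f'(0) = 0, there exists r ∈ [√n, √(2n)] with f(r) = −λ. -/

import Mathlib

open Real Set

/-- The profile ODE (2.7): `f''/(1+f'²) = (r - (n-1)/r) f' - f - λ √(1+f'²)` at the point `r`. -/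
def ProfileEq (n : ℕ) (lam : ℝ) (f : ℝ → ℝ) (r : ℝ) : Prop :=
  deriv (deriv f) r / (1 + (deriv f r) ^ 2) =
    (r - ((n : ℝ) - 1) / r) * deriv f r - f r - lam * Real.sqrt (1 + (deriv f r) ^ 2)


structure PSol (m : ℕ) (lam R ε : ℝ) (u P : ℝ → ℝ) : Prop where
  Rpos : 0 < R
  R2 : R ^ 2 = 2 * ((m : ℝ) + 2)
  cu : ContinuousOn u (Icc 0 R)
  cP : ContinuousOn P (Icc 0 R)
  du : ∀ r ∈ Ioo 0 R, HasDerivAt u (P r) r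
  dP : ∀ r ∈ Ioo 0 R, HasDerivAt P ((1 + P r ^ 2) * ((r - ((m : ℝ) + 1) / r) * P r - u r
        + lam * (1 - √(1 + P r ^ 2)))) r
  u0 : u 0 = ε

lemma PSol.neg {m : ℕ} {lam R ε : ℝ} {u P : ℝ → ℝ} (h : PSol m lam R ε u P) :
    PSol m (-lam) R (-ε) (fun r => - u r) (fun r => - P r) where
  Rpos := h.Rpos
  R2 := h.R2
  cu := h.cu.neg
  cP := h.cP.neg
  du := fun r hr => (h.du r hr).neg
  dP := fun r hr => by
    refine (h.dP r hr).neg.congr_deriv ?_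
    simp only [neg_sq]
    ring
  u0 := by simp [h.u0]

lemma mono_of_deriv {g g' : ℝ → ℝ} {a b c : ℝ} (hab : a ≤ b) (hc : ContinuousOn g (Icc a b))
    (hd : ∀ r ∈ Ioo a b, HasDerivAt g (g' r) r) (hl : ∀ r ∈ Ioo a b, c ≤ g' r) :
    g a + c * (b - a) ≤ g b := by
  have := (convex_Icc a b).mul_sub_le_image_sub_of_le_deriv hc (C := c)
    (by
      rw [interior_Icc]
      exact fun r hr => (hd r hr).differentiableAt.differentiableWithinAt)
    (by
      rw [interior_Icc]
      intro r hr
      rw [(hd r hr).deriv]; exact hl r hr) a (left_mem_Icc.2 hab) b (right_mem_Icc.2 hab) hab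
  linarith

lemma sqrt_bd (p : ℝ) : 0 ≤ √(1 + p ^ 2) - 1 ∧ √(1 + p ^ 2) - 1 ≤ p ^ 2 / 2 := by
  constructor
  · have : (1:ℝ) ≤ √(1 + p ^ 2) := by
      rw [Real.one_le_sqrt]; nlinarith [sq_nonneg p]
    linarith
  · have : √(1 + p ^ 2) ≤ 1 + p ^ 2 / 2 := by
      rw [Real.sqrt_le_left (by positivity)]; nlinarith [sq_nonneg (p^2)]
    linarith

lemma PSol.P0_le {m : ℕ} {lam R ε : ℝ} {u P : ℝ → ℝ} (h : PSol m lam R ε u P) : P 0 ≤ 0 := by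
  by_contra! hp
  have hR := h.Rpos
  obtain ⟨U, hU⟩ := isCompact_Icc.exists_bound_of_continuousOn h.cu
  obtain ⟨V, hV⟩ := isCompact_Icc.exists_bound_of_continuousOn h.cP
  simp only [Real.norm_eq_abs] at hU hV
  set p := P 0 with hpdef
  -- near zero P ≥ p/2
  have hcont := h.cP 0 (left_mem_Icc.2 hR.le)
  have hev : ∀ᶠ r in nhdsWithin 0 (Icc 0 R), p / 2 < P r :=
    hcont.eventually (lt_mem_nhds (by linarith : p / 2 < P 0))
  obtain ⟨η, hη, hη'⟩ := Metric.mem_nhdsWithin_iff.1 hev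
  set B : ℝ := (1 + V ^ 2) * (R * V + U + |lam| * V ^ 2) with hB
  have hVn : 0 ≤ V := (abs_nonneg _).trans (hV 0 (left_mem_Icc.2 hR.le))
  have hUn : 0 ≤ U := (abs_nonneg _).trans (hU 0 (left_mem_Icc.2 hR.le))
  have hBn : 0 ≤ B := by positivity
  set d := min (min (η / 2) (R / 2)) (p / (4 * (B + 1))) with hd
  have hd0 : 0 < d := by positivity
  have hdη : d ≤ η / 2 := (min_le_left _ _).trans (min_le_left _ _)
  have hdR : d ≤ R / 2 := (min_le_left _ _).trans (min_le_right _ _)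
  have hdB : d * (4 * (B + 1)) ≤ p := by
    have : d ≤ p / (4 * (B + 1)) := min_le_right _ _
    rwa [le_div_iff₀ (by positivity)] at this
  have key : ∀ s ∈ Ioo 0 d, P d + p / 4 * (Real.log d - Real.log s) ≤ P s := by
    intro s hs
    have := mono_of_deriv (g := fun r => - P r - p / 4 * Real.log r)
      (g' := fun r => -((1 + P r ^ 2) * ((r - ((m : ℝ) + 1) / r) * P r - u r
        + lam * (1 - √(1 + P r ^ 2)))) - p / 4 * r⁻¹) (a := s) (b := d) (c := 0) hs.2.le ?_ ?_ ?_
    · linarith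
    · apply ContinuousOn.sub
      · exact (h.cP.mono (Icc_subset_Icc hs.1.le (by linarith))).neg
      · apply ContinuousOn.mul continuousOn_const
        apply Real.continuousOn_log.mono
        intro x hx
        simp only [mem_compl_iff, mem_singleton_iff]
        linarith [hx.1, hs.1]
    · intro r hr
      have hr0 : 0 < r := hs.1.trans hr.1
      exact ((h.dP r ⟨hr0, by linarith [hr.2]⟩).neg).sub
        ((Real.hasDerivAt_log hr0.ne').const_mul _)
    · intro r hr
      have hr0 : 0 < r := hs.1.trans hr.1
      have hrI : r ∈ Icc 0 R := ⟨hr0.le, by linarith [hr.2]⟩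
      have h1 : p / 2 < P r := by
        apply hη'
        refine ⟨?_, hrI⟩
        rw [Metric.mem_ball, Real.dist_eq, abs_lt]; constructor <;> linarith [hr.2]
      have h2 := abs_le.1 (hU r hrI)
      have h3 := abs_le.1 (hV r hrI)
      obtain ⟨s1, s2⟩ := sqrt_bd (P r)
      have h4 : P r ^ 2 ≤ V ^ 2 := by nlinarith
      have e1 : -((1 + P r ^ 2) * ((r - ((m : ℝ) + 1) / r) * P r - u r
        + lam * (1 - √(1 + P r ^ 2)))) - p / 4 * r⁻¹ =
         ((1 + P r ^ 2) * ((m + 1) * P r) - p / 4) / r -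
           (1 + P r ^ 2) * (r * P r - u r - lam * (√(1 + P r ^ 2) - 1)) := by
        field_simp; ring
      have e2 : (1 + P r ^ 2) * (r * P r - u r - lam * (√(1 + P r ^ 2) - 1)) ≤ B := by
        have : r * P r - u r - lam * (√(1 + P r ^ 2) - 1) ≤ R * V + U + |lam| * V ^ 2 := by
          have a1 : r * P r ≤ R * V := by
            apply mul_le_mul hrI.2 h3.2 (by linarith) hR.le
          have a2 : -(lam * (√(1 + P r ^ 2) - 1)) ≤ |lam| * V ^ 2 := by
            calc -(lam * (√(1 + P r ^ 2) - 1)) ≤ |lam| * (√(1 + P r ^ 2) - 1) := by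
                  nlinarith [neg_abs_le lam]
              _ ≤ _ := by
                  apply mul_le_mul_of_nonneg_left _ (abs_nonneg _)
                  nlinarith
          linarith
        calc _ ≤ (1 + P r ^ 2) * (R * V + U + |lam| * V ^ 2) := by gcongr
          _ ≤ _ := by rw [hB]; gcongr
      have e3 : B ≤ ((1 + P r ^ 2) * ((m + 1) * P r) - p / 4) / r := by
        rw [le_div_iff₀ hr0]
        have b1 : P r ≤ (m + 1) * P r := by
          have : (0:ℝ) ≤ m := Nat.cast_nonneg m
          nlinarith
        have b2 : (m + 1) * P r ≤ (1 + P r ^ 2) * ((m + 1) * P r) := by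
          nlinarith [sq_nonneg (P r)]
        have b3 : B * r ≤ B * d := by gcongr; exact hr.2.le
        nlinarith
      rw [e1]; linarith
  -- choose s tiny
  set s := min (d / 2) (d * Real.exp (-(4 / p * (2 * V + 1)))) with hs
  have hs0 : 0 < s := by positivity
  have hsd : s < d := lt_of_le_of_lt (min_le_left _ _) (by linarith)
  have := key s ⟨hs0, hsd⟩
  have hlog : Real.log s ≤ Real.log d - 4 / p * (2 * V + 1) := by
    calc Real.log s ≤ Real.log (d * Real.exp (-(4 / p * (2 * V + 1)))) :=
          Real.log_le_log hs0 (min_le_right _ _)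
      _ = _ := by rw [Real.log_mul hd0.ne' (Real.exp_ne_zero _), Real.log_exp]; ring
  have h5 : 2 * V + 1 ≤ p / 4 * (Real.log d - Real.log s) := by
    calc 2 * V + 1 = p / 4 * (4 / p * (2 * V + 1)) := by field_simp
      _ ≤ _ := by gcongr; linarith
  have h6 := abs_le.1 (hV d ⟨hd0.le, by linarith⟩)
  have h7 := abs_le.1 (hV s ⟨hs0.le, by linarith⟩)
  linarith

lemma PSol.P0 {m : ℕ} {lam R ε : ℝ} {u P : ℝ → ℝ} (h : PSol m lam R ε u P) : P 0 = 0 := by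
  have h1 := h.P0_le
  have h2 := h.neg.P0_le
  linarith

lemma PSol.energy {m : ℕ} {lam R ε : ℝ} {u P : ℝ → ℝ} (h : PSol m lam R ε u P) {s : ℝ}
    (hs : s ∈ Icc 0 R) (hP : ∀ r ∈ Ioo 0 s, |P r| ≤ 1) :
    u s ^ 2 + P s ^ 2 ≤ ε ^ 2 * Real.exp ((4 * R + 2 * |lam| + 1) * R) := by
  set C := 4 * R + 2 * |lam| + 1 with hC
  have hR := h.Rpos
  have hsub : Icc 0 s ⊆ Icc 0 R := Icc_subset_Icc le_rfl hs.2
  have := mono_of_deriv (g := fun r => -((u r ^ 2 + P r ^ 2) * Real.exp (-(C * r))))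
    (g' := fun r => -((2 * u r * P r + 2 * P r * ((1 + P r ^ 2) * ((r - ((m : ℝ) + 1) / r) * P r
      - u r + lam * (1 - √(1 + P r ^ 2)))) - C * (u r ^ 2 + P r ^ 2)) * Real.exp (-(C * r))))
    (a := 0) (b := s) (c := 0) hs.1 ?_ ?_ ?_
  · simp only [h.u0, h.P0] at this
    have h1 : (u s ^ 2 + P s ^ 2) * Real.exp (-(C * s)) ≤ ε ^ 2 := by
      simp at this; linarith
    calc u s ^ 2 + P s ^ 2 = ((u s ^ 2 + P s ^ 2) * Real.exp (-(C * s))) * Real.exp (C * s) := by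
          rw [mul_assoc, ← Real.exp_add]; simp
      _ ≤ ε ^ 2 * Real.exp (C * s) := by gcongr
      _ ≤ _ := by gcongr; exact hs.2
  · have c1 := h.cu.mono hsub
    have c2 := h.cP.mono hsub
    fun_prop
  · intro r hr
    have hrI : r ∈ Ioo 0 R := ⟨hr.1, hr.2.trans_le hs.2⟩
    have d1 := ((h.du r hrI).pow 2).add ((h.dP r hrI).pow 2)
    have d2 : HasDerivAt (fun r => Real.exp (-(C * r))) (Real.exp (-(C * r)) * (-(C * 1))) r :=
      (((hasDerivAt_id r).const_mul C).neg).exp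
    refine ((d1.mul d2).neg).congr_deriv ?_
    simp only [Pi.add_apply, Pi.pow_apply]
    push_cast
    ring
  · intro r hr
    have hrI : r ∈ Ioo 0 R := ⟨hr.1, hr.2.trans_le hs.2⟩
    have hp := abs_le.1 (hP r hr)
    obtain ⟨s1, s2⟩ := sqrt_bd (P r)
    set p := P r
    set v := u r
    set q := √(1 + p ^ 2) - 1 with hq
    have hp2 : p ^ 2 ≤ 1 := by nlinarith
    have e : 2 * v * p + 2 * p * ((1 + p ^ 2) * ((r - ((m : ℝ) + 1) / r) * p
      - v + lam * (1 - √(1 + p ^ 2)))) = 2 * (1 + p ^ 2) * r * p ^ 2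
        - 2 * (1 + p ^ 2) * (((m : ℝ) + 1) / r) * p ^ 2 - 2 * v * p ^ 3
        - 2 * (1 + p ^ 2) * lam * p * q := by rw [hq]; ring
    have a1 : 2 * (1 + p ^ 2) * r * p ^ 2 ≤ 4 * R * p ^ 2 := by
      have : (1 + p ^ 2) * r ≤ 2 * R := by
        apply mul_le_mul (by linarith) hrI.2.le hr.1.le (by norm_num)
      nlinarith [sq_nonneg p]
    have a2 : 0 ≤ 2 * (1 + p ^ 2) * (((m : ℝ) + 1) / r) * p ^ 2 := by
      have := hr.1
      positivity
    have a3 : - (2 * v * p ^ 3) ≤ v ^ 2 + p ^ 2 := by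
      have : p ^ 3 * p ^ 3 ≤ p ^ 2 := by
        have : p ^ 3 * p ^ 3 = p ^ 2 * (p ^ 2 * p ^ 2) := by ring
        rw [this]; nlinarith [sq_nonneg p]
      nlinarith [sq_nonneg (v + p ^ 3)]
    have a4 : - (2 * (1 + p ^ 2) * lam * p * q) ≤ 2 * |lam| * p ^ 2 := by
      calc - (2 * (1 + p ^ 2) * lam * p * q) ≤ |2 * (1 + p ^ 2) * lam * p * q| := neg_le_abs _
        _ = 2 * (1 + p ^ 2) * |lam| * |p| * q := by
          rw [abs_mul, abs_mul, abs_mul, abs_of_nonneg s1,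
            abs_of_nonneg (by positivity : 0 ≤ 2 * (1 + p ^ 2))]
        _ ≤ 2 * (1 + 1) * |lam| * 1 * (p ^ 2 / 2) := by
          have := hP r hr
          gcongr
        _ = _ := by ring
    have : 2 * v * p + 2 * p * ((1 + p ^ 2) * ((r - ((m : ℝ) + 1) / r) * p
      - v + lam * (1 - √(1 + p ^ 2)))) - C * (v ^ 2 + p ^ 2) ≤ 0 := by
      rw [e, hC]
      have : 0 ≤ (4 * R + 2 * |lam|) * v ^ 2 := by positivity
      nlinarith
    have hexp := Real.exp_pos (-(C * r))
    nlinarith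

lemma PSol.bound {m : ℕ} {lam R ε K : ℝ} {u P : ℝ → ℝ} (h : PSol m lam R ε u P)
    (hK0 : 0 < K) (hε : 0 < ε)
    (hK : Real.exp ((4 * R + 2 * |lam| + 1) * R) = K ^ 2) (hKε : K * ε < 1) :
    ∀ r ∈ Icc 0 R, |u r| ≤ K * ε ∧ |P r| ≤ K * ε := by
  have hR := h.Rpos
  have step : ∀ s ∈ Icc 0 R, (∀ r ∈ Ioo 0 s, |P r| ≤ 1) → u s ^ 2 + P s ^ 2 ≤ (K * ε) ^ 2 := by
    intro s hs hp
    have := h.energy hs hp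
    rw [hK] at this; linarith [mul_pow K ε 2]
  have hpos : 0 < K * ε := by positivity
  have all : ∀ s ∈ Icc 0 R, |P s| ≤ 1 := by
    by_contra! hcon
    obtain ⟨s, hs, hs1⟩ := hcon
    have hcl : IsCompact {r ∈ Icc 0 R | 1 ≤ |P r|} := by
      have : {r ∈ Icc 0 R | 1 ≤ |P r|} = Icc 0 R ∩ (fun r => |P r|) ⁻¹' (Ici 1) := rfl
      rw [this]
      exact isCompact_Icc.of_isClosed_subset
        (h.cP.abs.preimage_isClosed_of_isClosed isClosed_Icc isClosed_Ici) inter_subset_left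
    obtain ⟨t, ⟨ht, ht1⟩, hmin⟩ := hcl.exists_isLeast ⟨s, hs, hs1.le⟩
    have := step t ht (by
      intro r hr
      by_contra! hc
      have := hmin (⟨⟨hr.1.le, hr.2.le.trans ht.2⟩, hc.le⟩ : r ∈ {r ∈ Icc 0 R | 1 ≤ |P r|})
      linarith [hr.2])
    have h3 : 1 ≤ P t ^ 2 := by rw [← sq_abs]; nlinarith
    nlinarith [sq_nonneg (u t)]
  intro r hr
  have := step r hr (fun x hx => all x ⟨hx.1.le, hx.2.le.trans hr.2⟩)
  constructor
  · apply abs_le_of_sq_le_sq _ hpos.le; nlinarith [sq_nonneg (P r)]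
  · apply abs_le_of_sq_le_sq _ hpos.le; nlinarith [sq_nonneg (u r)]

lemma PSol.wron {m : ℕ} {lam R ε : ℝ} {u P : ℝ → ℝ} (h : PSol m lam R ε u P)
    (a : ℝ) : ∀ r ∈ Ioo 0 R, HasDerivAt
      (fun r => r ^ (m + 1) * Real.exp (-(r ^ 2 / 2)) * ((a - r ^ 2) * P r + 2 * r * u r))
      (r ^ m * Real.exp (-(r ^ 2 / 2)) * ((a - r ^ 2) * (P r ^ 2 * (r ^ 2 * P r - (m + 1) * P r
        - r * u r) + (1 + P r ^ 2) * r * lam * (1 - √(1 + P r ^ 2))))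
        + r ^ (m + 1) * Real.exp (-(r ^ 2 / 2)) * (u r * (2 * ((m : ℝ) + 2) - a - r ^ 2))) r := by
  intro r hr
  have hr0 : r ≠ 0 := hr.1.ne'
  have d1 : HasDerivAt (fun r : ℝ => r ^ (m + 1) * Real.exp (-(r ^ 2 / 2)))
      ((((m + 1 : ℕ) : ℝ) * r ^ m) * Real.exp (-(r ^ 2 / 2)) +
        r ^ (m + 1) * (Real.exp (-(r ^ 2 / 2)) * (-((2:ℕ) * r ^ 1 / 2)))) r :=
    (hasDerivAt_pow (m + 1) r).mul (((hasDerivAt_pow 2 r).div_const 2).neg.exp)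
  have d2 : HasDerivAt (fun r : ℝ => (a - r ^ 2) * P r + 2 * r * u r) _ r :=
    (((hasDerivAt_pow 2 r).const_sub a).mul (h.dP r hr)).add
      (((hasDerivAt_id r).const_mul 2).mul (h.du r hr))
  refine (d1.mul d2).congr_deriv ?_
  push_cast
  simp only [id]
  field_simp
  ring

/-- The error term bound. -/
lemma err_bound {m : ℕ} {lam R k r p v : ℝ} (hr : r ∈ Ioo 0 R) (hp : |p| ≤ k) (hv : |v| ≤ k)
    (hk : k ≤ 1) (c : ℝ) (A : ℝ) (hc : |c| ≤ A) :
    |r ^ m * Real.exp (-(r ^ 2 / 2)) * (c * (p ^ 2 * (r ^ 2 * p - (m + 1) * p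
        - r * v) + (1 + p ^ 2) * r * lam * (1 - √(1 + p ^ 2))))| ≤
      R ^ m * (A * (R ^ 2 + (m + 1) + R + R * |lam|)) * k ^ 2 := by
  have hr0 := hr.1
  have hrR := hr.2.le
  have hR : 0 < R := hr0.trans hr.2
  have hk0 : 0 ≤ k := (abs_nonneg _).trans hp
  have hA : 0 ≤ A := (abs_nonneg _).trans hc
  obtain ⟨s1, s2⟩ := sqrt_bd p
  have hp2 : p ^ 2 ≤ k ^ 2 := by rw [← sq_abs]; gcongr
  have hk2 : k ^ 2 ≤ 1 := by nlinarith
  have hp1 : |p| ≤ 1 := hp.trans hk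
  have hv1 : |v| ≤ 1 := hv.trans hk
  have e1 : |p ^ 2 * (r ^ 2 * p - (m + 1) * p - r * v)| ≤ k ^ 2 * (R ^ 2 + (m + 1) + R) := by
    rw [abs_mul, abs_of_nonneg (sq_nonneg p)]
    have : |r ^ 2 * p - (m + 1) * p - r * v| ≤ R ^ 2 + (m + 1) + R := by
      calc |r ^ 2 * p - (m + 1) * p - r * v| ≤ |r ^ 2 * p| + |((m:ℝ) + 1) * p| + |r * v| := by
            exact (abs_sub _ _).trans (add_le_add_left (abs_sub _ _) _)
        _ = r ^ 2 * |p| + ((m:ℝ) + 1) * |p| + r * |v| := by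
            rw [abs_mul, abs_mul, abs_mul, abs_of_pos hr0,
              abs_of_pos (by positivity : 0 < r ^ 2), abs_of_pos (by positivity : 0 < (m:ℝ) + 1)]
        _ ≤ R ^ 2 * 1 + ((m:ℝ) + 1) * 1 + R * 1 := by gcongr
        _ = _ := by ring
    gcongr
  have e2 : |(1 + p ^ 2) * r * lam * (1 - √(1 + p ^ 2))| ≤ k ^ 2 * (R * |lam|) := by
    rw [abs_mul, abs_mul, abs_mul, abs_of_pos hr0, abs_of_pos (by positivity : 0 < 1 + p ^ 2),
      abs_sub_comm, abs_of_nonneg s1]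
    calc (1 + p ^ 2) * r * |lam| * (√(1 + p ^ 2) - 1) ≤ (1 + 1) * R * |lam| * (k ^ 2 / 2) := by
          gcongr
          · linarith
          · linarith
      _ = _ := by ring
  have e3 : r ^ m * Real.exp (-(r ^ 2 / 2)) ≤ R ^ m := by
    calc r ^ m * Real.exp (-(r ^ 2 / 2)) ≤ R ^ m * 1 := by
          gcongr
          rw [Real.exp_le_one_iff]; nlinarith
      _ = _ := by ring
  rw [abs_mul, abs_of_nonneg (by positivity : 0 ≤ r ^ m * Real.exp (-(r ^ 2 / 2))), abs_mul]
  calc _ ≤ R ^ m * (A * (k ^ 2 * (R ^ 2 + (m + 1) + R) + k ^ 2 * (R * |lam|))) := by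
        gcongr
        exact (abs_add_le _ _).trans (add_le_add e1 e2)
    _ = _ := by ring

lemma three_step {W W' : ℝ → ℝ} {t δ a b : ℝ} (hδ : 0 < δ) (ht : δ ≤ t)
    (hc : ContinuousOn W (Icc 0 t)) (hd : ∀ r ∈ Ioo 0 t, HasDerivAt W (W' r) r) (h0 : W 0 = 0)
    (h1 : ∀ r ∈ Ioo 0 t, -b ≤ W' r) (h2 : ∀ r ∈ Ioo (δ / 2) δ, a - b ≤ W' r) :
    a * (δ / 2) - b * t ≤ W t := by
  have s1 := mono_of_deriv (a := 0) (b := δ / 2) (c := -b) (g := W) (g' := W') (by linarith)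
    (hc.mono (Icc_subset_Icc (by linarith) (by linarith)))
    (fun r hr => hd r ⟨hr.1, by linarith [hr.2]⟩) (fun r hr => h1 r ⟨hr.1, by linarith [hr.2]⟩)
  have s2 := mono_of_deriv (a := δ / 2) (b := δ) (c := a - b) (g := W) (g' := W') (by linarith)
    (hc.mono (Icc_subset_Icc (by linarith) (by linarith)))
    (fun r hr => hd r ⟨by linarith [hr.1], by linarith [hr.2]⟩) (fun r hr => h2 r hr)
  have s3 := mono_of_deriv (a := δ) (b := t) (c := -b) (g := W) (g' := W') (by linarith)
    (hc.mono (Icc_subset_Icc (by linarith) (by linarith)))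
    (fun r hr => hd r ⟨by linarith [hr.1], by linarith [hr.2]⟩)
    (fun r hr => h1 r ⟨by linarith [hr.1], by linarith [hr.2]⟩)
  rw [h0] at s1
  linarith

set_option maxHeartbeats 1600000 in
lemma core (m : ℕ) (lam R : ℝ) (hR : 0 < R) (hR2 : R ^ 2 = 2 * ((m : ℝ) + 2)) :
    ∃ ε₁ > (0 : ℝ), ∀ ε : ℝ, 0 < ε → ε ≤ ε₁ → ∀ u P : ℝ → ℝ, PSol m lam R ε u P →
      ∃ r ∈ Icc (√((m : ℝ) + 2)) R, u r = 0 := by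
  obtain ⟨K, hK1, hK⟩ : ∃ K : ℝ, 1 ≤ K ∧
      Real.exp ((4 * R + 2 * |lam| + 1) * R) = K ^ 2 := by
    refine ⟨Real.exp ((4 * R + 2 * |lam| + 1) * R / 2), ?_, ?_⟩
    · rw [Real.one_le_exp_iff]; positivity
    · rw [← Real.exp_nat_mul]; congr 1; push_cast; ring
  have hK0 : 0 < K := by linarith
  set S := √((m : ℝ) + 2) with hS
  have hS2 : S ^ 2 = (m : ℝ) + 2 := Real.sq_sqrt (by positivity)
  have hS0 : 0 < S := by rw [hS]; positivity
  have hSR : S < R := by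
    apply lt_of_pow_lt_pow_left₀ 2 hR.le; rw [hS2, hR2]; linarith [(Nat.cast_nonneg m : (0:ℝ) ≤ m)]
  have hm : (0:ℝ) ≤ m := Nat.cast_nonneg m
  have hS1 : 1 < S := by
    rw [hS, Real.lt_sqrt (by norm_num)]; linarith
  set δ := 1 / (2 * K) with hδ
  have hδ0 : 0 < δ := by positivity
  have hKδ : K * δ = 1 / 2 := by rw [hδ]; field_simp
  have hδ1 : δ ≤ 1 / 2 := by nlinarith
  set C := R ^ m * (R ^ 2 * (R ^ 2 + (m + 1) + R + R * |lam|)) * K ^ 2 with hC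
  have hC0 : 0 ≤ C := by positivity
  set μ := (δ / 2) ^ (m + 1) * Real.exp (-1) * ((δ / 2) ^ 2 / 2) with hμ
  have hμ0 : 0 < μ := by positivity
  refine ⟨min (1 / (2 * K)) (μ * δ / (4 * (C * R + 1))), by positivity, ?_⟩
  intro ε hε hε1 u P h
  have hεK : K * ε < 1 := by
    have : ε ≤ 1 / (2 * K) := hε1.trans (min_le_left _ _)
    rw [le_div_iff₀ (by positivity)] at this
    linarith
  have hεC : C * R * ε < μ * δ / 2 := by
    have : ε ≤ μ * δ / (4 * (C * R + 1)) := hε1.trans (min_le_right _ _)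
    rw [le_div_iff₀ (by positivity)] at this
    have : 0 < μ * δ := by positivity
    linarith
  have hb := h.bound hK0 hε hK hεK
  -- final positivity
  have hfin : ∀ t ∈ Icc 0 R, 0 < μ * ε * (δ / 2) - C * ε ^ 2 * t := by
    intro t ht
    have : C * ε ^ 2 * t ≤ C * ε ^ 2 * R := by gcongr; exact ht.2
    nlinarith
  -- early lower bound
  have hearly : ∀ r ∈ Icc 0 δ, ε / 2 ≤ u r := by
    intro r hr
    have := mono_of_deriv (g := u) (g' := P) (a := 0) (b := r) (c := -(K * ε)) hr.1
      (h.cu.mono (Icc_subset_Icc le_rfl (by linarith [hr.2])))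
      (fun x hx => h.du x ⟨hx.1, by linarith [hr.2, hx.2]⟩)
      (fun x hx => (abs_le.1 (hb x ⟨hx.1.le, by linarith [hr.2, hx.2]⟩).2).1)
    rw [h.u0] at this
    have : K * ε * r ≤ K * ε * δ := by gcongr; exact hr.2
    have : K * ε * δ = ε / 2 := by
      calc K * ε * δ = (K * δ) * ε := by ring
        _ = _ := by rw [hKδ]; ring
    linarith
  have herr : ∀ a ∈ Icc 0 (R ^ 2), ∀ r ∈ Ioo 0 R, |r ^ m * Real.exp (-(r ^ 2 / 2)) *
      ((a - r ^ 2) * (P r ^ 2 * (r ^ 2 * P r - (m + 1) * P r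
        - r * u r) + (1 + P r ^ 2) * r * lam * (1 - √(1 + P r ^ 2))))| ≤ C * ε ^ 2 := by
    intro a ha r hr
    have hrI : r ∈ Icc 0 R := ⟨hr.1.le, hr.2.le⟩
    have := err_bound (m := m) (lam := lam) hr (hb r hrI).2 (hb r hrI).1 hεK.le (a - r ^ 2) (R ^ 2)
      (by
        rw [abs_le]
        have : r ^ 2 ≤ R ^ 2 := by gcongr; exact hr.1.le; exact hr.2.le
        constructor <;> nlinarith [ha.1, ha.2])
    refine this.trans (le_of_eq ?_)
    rw [hC]; ring
  have hW0 : ∀ a : ℝ, (fun r => r ^ (m + 1) * Real.exp (-(r ^ 2 / 2)) *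
      ((a - r ^ 2) * P r + 2 * r * u r)) 0 = 0 := by intro a; simp
  have hWc : ∀ a : ℝ, ContinuousOn (fun r => r ^ (m + 1) * Real.exp (-(r ^ 2 / 2)) *
      ((a - r ^ 2) * P r + 2 * r * u r)) (Icc 0 R) := by
    intro a
    have c1 := h.cu
    have c2 := h.cP
    fun_prop
  have hlow : ∀ r ∈ Ioo (δ / 2) δ, ∀ q : ℝ, (δ / 2) ^ 2 ≤ q →
      μ * ε ≤ r ^ (m + 1) * Real.exp (-(r ^ 2 / 2)) * (u r * q) := by
    intro r hr q hq
    have hr0 : 0 < r := by linarith [hr.1]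
    have h1 := hearly r ⟨hr0.le, hr.2.le⟩
    have h2 : (δ / 2) ^ (m + 1) ≤ r ^ (m + 1) := by gcongr; exact hr.1.le
    have h3 : Real.exp (-1) ≤ Real.exp (-(r ^ 2 / 2)) := by
      rw [Real.exp_le_exp]; nlinarith [hr.2]
    have h4 : 0 ≤ u r := by linarith
    calc μ * ε = (δ / 2) ^ (m + 1) * Real.exp (-1) * ((ε / 2) * (δ / 2) ^ 2) := by rw [hμ]; ring
      _ ≤ _ := by gcongr
  -- positivity on [0,S]
  have hpos : ∀ t ∈ Icc 0 S, 0 < u t := by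
    by_contra! hcon
    obtain ⟨s, hs, hs1⟩ := hcon
    have hcS : ContinuousOn u (Icc 0 S) := h.cu.mono (Icc_subset_Icc le_rfl hSR.le)
    have hcl : IsCompact {r ∈ Icc 0 S | u r ≤ 0} := by
      have : {r ∈ Icc 0 S | u r ≤ 0} = Icc 0 S ∩ u ⁻¹' (Iic 0) := rfl
      rw [this]
      exact isCompact_Icc.of_isClosed_subset
        (hcS.preimage_isClosed_of_isClosed isClosed_Icc isClosed_Iic) inter_subset_left
    obtain ⟨t, ⟨ht, ht1⟩, hmin⟩ := hcl.exists_isLeast ⟨s, hs, hs1⟩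
    have hbefore : ∀ r ∈ Ico 0 t, 0 < u r := by
      intro r hr
      by_contra! hc
      have := hmin (⟨⟨hr.1, hr.2.le.trans ht.2⟩, hc⟩ : r ∈ {r ∈ Icc 0 S | u r ≤ 0})
      linarith [hr.2]
    have hδt : δ < t := by
      by_contra! hc
      have := hearly t ⟨ht.1, hc⟩
      linarith
    have htR : t < R := ht.2.trans_lt hSR
    have ht0 : 0 < t := by linarith
    have hstep := three_step hδ0 hδt.le ((hWc (m + 2)).mono (Icc_subset_Icc le_rfl htR.le))
      (fun r hr => h.wron (m + 2) r ⟨hr.1, hr.2.trans htR⟩) (hW0 _) (b := C * ε ^ 2)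
      (a := μ * ε) ?_ ?_
    · have := hfin t ⟨ht.1, htR.le⟩
      have hWt : 0 < t ^ (m + 1) * Real.exp (-(t ^ 2 / 2)) *
          (((m:ℝ) + 2 - t ^ 2) * P t + 2 * t * u t) := by linarith
      have hQ : 0 < ((m:ℝ) + 2 - t ^ 2) * P t + 2 * t * u t :=
        pos_of_mul_pos_right hWt (by positivity)
      have ha : 0 ≤ (m:ℝ) + 2 - t ^ 2 := by
        rw [← hS2]; nlinarith [ht.2]
      have hPt : 0 < P t := by
        by_contra! hc
        nlinarith [mul_nonneg ha (neg_nonneg.2 hc)]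
      have hd := (h.du t ⟨ht0, htR⟩)
      have hsl := (hasDerivAt_iff_tendsto_slope.1 hd)
      have hev : ∀ᶠ x in nhdsWithin t {t}ᶜ, 0 < slope u t x := hsl.eventually (lt_mem_nhds hPt)
      have hev2 : ∀ᶠ x in nhdsWithin t (Iio t), 0 < slope u t x :=
        hev.filter_mono (nhdsWithin_mono _ (fun x hx => ne_of_lt hx))
      have hev3 : ∀ᶠ x in nhdsWithin t (Iio t), x ∈ Ioo 0 t := Ioo_mem_nhdsLT ht0
      obtain ⟨x, hx1, hx2⟩ := (hev2.and hev3).exists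
      rw [slope_def_field] at hx1
      have hux := hbefore x ⟨hx2.1.le, hx2.2⟩
      have : (u x - u t) / (x - t) < 0 :=
        div_neg_of_pos_of_neg (by linarith) (by linarith [hx2.2])
      linarith
    · intro r hr
      have h1 := (abs_le.1 (herr (m + 2) ⟨by positivity, by rw [hR2]; linarith⟩ r
        ⟨hr.1, hr.2.trans htR⟩)).1
      have h2 : 0 ≤ r ^ (m + 1) * Real.exp (-(r ^ 2 / 2)) *
          (u r * (2 * ((m : ℝ) + 2) - (m + 2) - r ^ 2)) := by
        have a1 := hbefore r ⟨hr.1.le, hr.2⟩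
        have a2 : 0 ≤ 2 * ((m : ℝ) + 2) - (m + 2) - r ^ 2 := by
          nlinarith [hr.1, hr.2, ht.2]
        have := hr.1
        positivity
      linarith
    · intro r hr
      have hr0 : 0 < r := by linarith [hr.1]
      have h1 := (abs_le.1 (herr (m + 2) ⟨by positivity, by rw [hR2]; linarith⟩ r
        ⟨hr0, by linarith [hr.2]⟩)).1
      have h2 := hlow r hr (2 * ((m : ℝ) + 2) - (m + 2) - r ^ 2) (by nlinarith [hr.2])
      linarith
  by_contra! hno
  have hposR : ∀ t ∈ Icc 0 R, 0 < u t := by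
    intro t ht
    by_cases htS : t ≤ S
    · exact hpos t ⟨ht.1, htS⟩
    · push Not at htS
      by_contra! hc
      have := intermediate_value_Icc' htS.le
        (h.cu.mono (Icc_subset_Icc hS0.le ht.2))
      obtain ⟨x, hx, hx0⟩ := this ⟨hc, (hpos S ⟨hS0.le, le_rfl⟩).le⟩
      exact hno x ⟨hx.1, hx.2.trans ht.2⟩ hx0
  have hstep := three_step hδ0 (by linarith : δ ≤ R) (hWc (R ^ 2)).neg
      (fun r hr => (h.wron (R ^ 2) r hr).neg) (by simp) (b := C * ε ^ 2)
      (a := μ * ε) ?_ ?_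
  · have := hfin R ⟨hR.le, le_rfl⟩
    have hu := hposR R ⟨hR.le, le_rfl⟩
    have : 0 < R ^ (m + 1) * Real.exp (-(R ^ 2 / 2)) * ((R ^ 2 - R ^ 2) * P R + 2 * R * u R) := by
      rw [sub_self, zero_mul, zero_add]; positivity
    rw [Pi.neg_apply] at hstep
    linarith
  · intro r hr
    have h1 := (abs_le.1 (herr (R ^ 2) ⟨by positivity, le_rfl⟩ r hr)).2
    have h2 : 0 ≤ r ^ (m + 1) * Real.exp (-(r ^ 2 / 2)) * (u r * r ^ 2) := by
      have a1 := hposR r ⟨hr.1.le, hr.2.le⟩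
      have := hr.1
      positivity
    rw [← hR2]
    linarith
  · intro r hr
    have hr0 : 0 < r := by linarith [hr.1]
    have h1 := (abs_le.1 (herr (R ^ 2) ⟨by positivity, le_rfl⟩ r ⟨hr0, by linarith [hr.2]⟩)).2
    have h2 := hlow r hr (r ^ 2) (by gcongr; exact hr.1.le)
    rw [← hR2]
    linarith

lemma psol_of (m : ℕ) (lam R ε : ℝ) (hR : 0 < R) (hR2 : R ^ 2 = 2 * ((m : ℝ) + 2)) (f : ℝ → ℝ)
    (h1 : ContDiffOn ℝ 1 f (Icc 0 R)) (h2 : ContDiffOn ℝ 2 f (Ioc 0 R))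
    (ho : ∀ r ∈ Ioc (0 : ℝ) R, ProfileEq (m + 2) lam f r) (h0 : f 0 = -lam + ε) :
    PSol m lam R ε (fun r => f r + lam) (derivWithin f (Icc 0 R)) where
  Rpos := hR
  R2 := hR2
  cu := h1.continuousOn.add continuousOn_const
  cP := h1.continuousOn_derivWithin (uniqueDiffOn_Icc hR) le_rfl
  du := fun r hr => by
    have hn : Icc 0 R ∈ nhds r := Icc_mem_nhds hr.1 hr.2
    have := (h1.differentiableOn one_ne_zero).differentiableAt hn
    rw [derivWithin_of_mem_nhds hn]
    exact this.hasDerivAt.add_const lam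
  dP := fun r hr => by
    have hn : Icc 0 R ∈ nhds r := Icc_mem_nhds hr.1 hr.2
    have hev : derivWithin f (Icc 0 R) =ᶠ[nhds r] deriv f := by
      filter_upwards [Ioo_mem_nhds hr.1 hr.2] with x hx
      exact derivWithin_of_mem_nhds (Icc_mem_nhds hx.1 hx.2)
    have h2' : ContDiffOn ℝ 2 f (Ioo 0 R) := h2.mono Ioo_subset_Ioc_self
    have hd : ContDiffOn ℝ 1 (deriv f) (Ioo 0 R) :=
      h2'.deriv_of_isOpen isOpen_Ioo (by norm_num)
    have hdd : DifferentiableAt ℝ (deriv f) r :=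
      (hd.differentiableOn one_ne_zero).differentiableAt (Ioo_mem_nhds hr.1 hr.2)
    refine (hdd.hasDerivAt.congr_of_eventuallyEq hev).congr_deriv ?_
    rw [hev.eq_of_nhds]
    have := ho r ⟨hr.1, hr.2.le⟩
    unfold ProfileEq at this
    rw [div_eq_iff (by positivity)] at this
    rw [this]; push_cast; ring
  u0 := by simp [h0]

/-- Lemma 3.2: every solution of the profile ODE starting at `f(0) = -λ + ε` with `ε ≠ 0`
small enough crosses the hyperplane level `-λ` somewhere in `[√n, √(2n)]`. -/
theorem crossing_hyperplane_level
    (n : ℕ) (hn : 2 ≤ n) (lam : ℝ) :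
    ∃ ε₁ > (0 : ℝ), ∀ ε : ℝ, 0 < |ε| → |ε| ≤ ε₁ →
      ∀ f : ℝ → ℝ,
        ContDiffOn ℝ 1 f (Icc 0 (Real.sqrt (2 * n))) →
        ContDiffOn ℝ 2 f (Ioc 0 (Real.sqrt (2 * n))) →
        (∀ r ∈ Ioc (0 : ℝ) (Real.sqrt (2 * n)), ProfileEq n lam f r) →
        f 0 = -lam + ε → deriv f 0 = 0 →
        ∃ r ∈ Icc (Real.sqrt n) (Real.sqrt (2 * n)), f r = -lam := by
  obtain ⟨m, rfl⟩ : ∃ m, n = m + 2 := ⟨n - 2, by omega⟩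
  set R := Real.sqrt (2 * ((m + 2 : ℕ) : ℝ)) with hRdef
  have hR : 0 < R := by rw [hRdef]; positivity
  have hR2 : R ^ 2 = 2 * ((m : ℝ) + 2) := by
    rw [hRdef, Real.sq_sqrt (by positivity)]; push_cast; ring
  have hcast : (((m + 2 : ℕ)) : ℝ) = (m : ℝ) + 2 := by push_cast; ring
  obtain ⟨e1, he1, H1⟩ := core m lam R hR hR2
  obtain ⟨e2, he2, H2⟩ := core m (-lam) R hR hR2
  refine ⟨min e1 e2, lt_min he1 he2, ?_⟩
  intro ε hε hε1 f h1 h2 ho h0 _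
  have hsol := psol_of m lam R ε hR hR2 f h1 h2 ho h0
  rw [hcast]
  rcases lt_or_gt_of_ne (abs_pos.1 hε) with hneg | hpos
  · rw [abs_of_neg hneg] at hε1
    obtain ⟨r, hr, hr0⟩ := H2 (-ε) (by linarith) (hε1.trans (min_le_right _ _)) _ _ hsol.neg
    exact ⟨r, hr, by linarith⟩
  · rw [abs_of_pos hpos] at hε1
    obtain ⟨r, hr, hr0⟩ := H1 ε hpos (hε1.trans (min_le_left _ _)) _ _ hsol
    exact ⟨r, hr, by linarith⟩
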